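/- arXiv:1907.03941 — 2 statements merged into one kernel-verified Lean document; each statement's English description precedes it below -/
import Mathlib

section
/- Let G be a finitely generated group and ρ: G → GL_n(ℂ) a representation such that ρ(g) is quasi-unipotent for every g ∈ G. Then the semisimplification of ρ has finite image; equivalently, every irreducible subquotient of ρ has finite image. -/
/-! An irreducible subquotient `σ : G → GL(V)` again consists of quasi-unipotent operators, so it
suffices to treat an irreducible `σ` on a finite-dimensional nonzero space `V`.

*Finitely many traces* (`finite_traces`). The matrix entries of `σ` lie in a `ℚ`-algebra `R ⊆ ℂ` of
finite type. For a maximal ideal `I` of `R`, Zariski's lemma makes `R ⧸ I` a number field. Each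
trace is a sum of roots of unity, hence integral over `ℤ`. Its image in `R ⧸ I` is an algebraic
integer; under any embedding of `R ⧸ I` into `ℂ` it becomes the trace of a matrix which is again
quasi-unipotent (the identity `(A ^ k - 1) ^ m = 0` is preserved by ring homomorphisms), so it has
absolute value at most `dim V`. There are only finitely many such algebraic integers. Finally
`R → R ⧸ I` is injective on elements algebraic over `ℤ`, so there are only finitely many traces in
`R` itself. No bound on the orders of the eigenvalues is needed.

*From traces to finiteness* (`finite_of_irr`). By Burnside's theorem (`eq_top_of_irreducible`,
deduced from the density theorem and Schur's lemma) the operators `σ h` span `End V`, and the trace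
form on `End V` is nondegenerate (`eq_zero_of_trace_mul`). Hence `σ g` is determined by the finitely
many numbers `tr (σ g * σ h) = tr (σ (g * h))`, where `σ h` runs through a finite spanning set, and
each of them takes finitely many values. -/

/-- The representation induced on the subquotient `q/p` of a representation `ρ` on `V`,
for `G`-invariant submodules `p ≤ q`. -/
def subquotRep {G V : Type*} [Group G] [AddCommGroup V] [Module ℂ V]
    (ρ : Representation ℂ G V) (p q : Submodule ℂ V)
    (hp : ∀ g : G, ∀ v ∈ p, ρ g v ∈ p) (hq : ∀ g : G, ∀ v ∈ q, ρ g v ∈ q) (g : G) :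
    (q ⧸ p.comap q.subtype) →ₗ[ℂ] (q ⧸ p.comap q.subtype) :=
  Submodule.mapQ _ _ ((ρ g).restrict (hq g)) (by
    intro x hx
    simpa using hp g x.1 hx)

theorem pow_eq_one_of_mem_roots {V : Type*} [AddCommGroup V] [Module ℂ V] [FiniteDimensional ℂ V]
    (f : Module.End ℂ V) {k : ℕ} (hf : IsNilpotent (f ^ k - 1)) {z : ℂ}
    (hz : z ∈ f.charpoly.roots) : z ^ k = 1 := by
  obtain ⟨m, hm⟩ := hf
  have hz' : f.HasEigenvalue z :=
    Module.End.hasEigenvalue_iff_isRoot_charpoly _ _ |>.2 (Polynomial.isRoot_of_mem_roots hz)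
  obtain ⟨v, hv⟩ := hz'.exists_hasEigenvector
  have h1 : Polynomial.aeval f ((Polynomial.X ^ k - 1) ^ m : Polynomial ℂ) = 0 := by simpa using hm
  have h2 := Module.End.aeval_apply_of_hasEigenvector (p := ((Polynomial.X ^ k - 1) ^ m : Polynomial ℂ)) hv
  rw [h1] at h2
  have h3 : (z ^ k - 1) ^ m = 0 := by
    simpa [hv.2] using h2.symm
  exact sub_eq_zero.1 (eq_zero_of_pow_eq_zero h3)

/-- The trace of a quasi-unipotent operator is a sum of `dim V` roots of unity, which gives both
conclusions. -/
theorem norm_trace_le_and_isIntegral {V : Type*} [AddCommGroup V] [Module ℂ V] [FiniteDimensional ℂ V]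
    (f : Module.End ℂ V) {k : ℕ} (hk : 0 < k) (hf : IsNilpotent (f ^ k - 1)) :
    ‖LinearMap.trace ℂ V f‖ ≤ Module.finrank ℂ V ∧ IsIntegral ℤ (LinearMap.trace ℂ V f) := by
  rw [Module.End.trace_eq_sum_roots_charpoly_of_splits (IsAlgClosed.splits _)]
  have hr := fun z => pow_eq_one_of_mem_roots f hf (z := z)
  constructor
  · have h1 : (f.charpoly.roots.map (fun z => ‖z‖)).sum ≤ f.charpoly.roots.card • (1 : ℝ) := by
      have := Multiset.sum_le_card_nsmul (f.charpoly.roots.map (fun z => ‖z‖)) 1 (by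
        intro x hx
        obtain ⟨z, hz, rfl⟩ := Multiset.mem_map.1 hx
        exact (Complex.norm_eq_one_of_pow_eq_one (hr z hz) hk.ne').le)
      simpa using this
    have h2 : f.charpoly.roots.card ≤ Module.finrank ℂ V := by
      rw [← LinearMap.charpoly_natDegree f]; exact Polynomial.card_roots' _
    refine (norm_multiset_sum_le _).trans (h1.trans ?_)
    simpa using h2
  · refine IsIntegral.multiset_sum (fun z hz => ?_)
    exact IsIntegral.of_pow hk (by rw [hr z hz]; exact isIntegral_one)

/-- **Burnside's theorem** on irreducible algebras of operators over `ℂ`. -/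
theorem eq_top_of_irreducible {V : Type*} [AddCommGroup V] [Module ℂ V] [FiniteDimensional ℂ V]
    [Nontrivial V] (A : Subalgebra ℂ (Module.End ℂ V))
    (hirr : ∀ W : Submodule ℂ V, (∀ a ∈ A, ∀ v ∈ W, a v ∈ W) → W = ⊥ ∨ W = ⊤) : A = ⊤ := by
  have : IsSimpleModule A V := by
    rw [isSimpleModule_iff]
    refine ⟨fun W => ?_⟩
    rcases hirr (W.restrictScalars ℂ) (fun a ha v hv => W.smul_mem ⟨a, ha⟩ hv) with h | h
    · left; simpa using h
    · right; simpa using h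
  refine eq_top_iff.2 fun f _ => ?_
  -- By Schur's lemma `End_A V = ℂ`, so `f` is linear over the commutant of `A` and the density
  -- theorem applies to it.
  let F : Module.End (Module.End A V) V :=
    { toFun := f
      map_add' := f.map_add
      map_smul' := fun c v => by
        obtain ⟨z, rfl⟩ := (IsSimpleModule.algebraMap_end_bijective_of_isAlgClosed (A := A) ℂ).2 c
        simp }
  obtain ⟨s, hs⟩ := Module.Finite.fg_top (R := ℂ) (M := V)
  obtain ⟨r, hr⟩ := jacobson_density F s
  have : f = r.1 := LinearMap.ext_on hs (fun m hm => hr m hm)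
  rw [this]; exact r.2

/-- Nondegeneracy of the trace form on `End V`. -/
theorem eq_zero_of_trace_mul {V : Type*} [AddCommGroup V] [Module ℂ V] [FiniteDimensional ℂ V]
    (f : Module.End ℂ V) (h : ∀ g, LinearMap.trace ℂ V (f * g) = 0) : f = 0 := by
  let b := Module.finBasis ℂ V
  apply (LinearMap.toMatrixAlgEquiv b).injective
  rw [map_zero]
  refine Matrix.ext_iff_trace_mul_right.2 fun X => ?_
  have := h ((LinearMap.toMatrixAlgEquiv b).symm X)
  rw [LinearMap.trace_eq_matrix_trace ℂ b, LinearMap.toMatrix_mul] at this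
  rw [zero_mul, Matrix.trace_zero, ← this]
  congr 2
  exact ((LinearMap.toMatrixAlgEquiv b).apply_symm_apply X).symm

theorem norm_matrix_trace_le {m : Type*} [Fintype m] [DecidableEq m]
    (A : Matrix m m ℂ) {k : ℕ} (hk : 0 < k) (hf : IsNilpotent (A ^ k - 1)) :
    ‖A.trace‖ ≤ Fintype.card m ∧ IsIntegral ℤ A.trace := by
  have h1 : IsNilpotent (Matrix.toLinAlgEquiv' A ^ k - 1) := by
    simpa using hf.map (Matrix.toLinAlgEquiv' (R := ℂ) (n := m))
  have := norm_trace_le_and_isIntegral _ hk h1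
  rw [Module.finrank_fintype_fun_eq_card] at this
  rwa [show LinearMap.trace ℂ (m → ℂ) (Matrix.toLinAlgEquiv' A) = A.trace from Matrix.trace_toLin'_eq A] at this

/-- A finitely generated group of quasi-unipotent complex matrices has finitely many traces: they
embed, by reduction modulo a maximal ideal of the ring of entries, into the algebraic integers of a
number field all of whose conjugates are bounded by the matrix size. -/
theorem finite_traces {G : Type*} [Group G] (hFG : Group.FG G) {m : Type*} [Fintype m]
    [DecidableEq m] (M : G →* Matrix m m ℂ)
    (hM : ∀ g, ∃ k : ℕ, 0 < k ∧ IsNilpotent (M g ^ k - 1)) :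
    (Set.range fun g => (M g).trace).Finite := by
  obtain ⟨S, hS, hfin⟩ := Monoid.fg_iff.1 (Group.fg_iff_monoid_fg.1 hFG)
  let E : Set ℂ := ⋃ s ∈ S, Set.range fun ij : m × m => M s ij.1 ij.2
  have hE : E.Finite := hfin.biUnion fun s _ => Set.finite_range _
  -- A finitely generated algebra containing all entries of all `M g`; generating `G` as a monoid
  -- makes it unnecessary to treat inverses separately.
  let R : Subalgebra ℚ ℂ := Algebra.adjoin ℚ E
  have hR : Algebra.FiniteType ℚ R :=
    (Subalgebra.fg_iff_finiteType R).1 ⟨hE.toFinset, by simp [R]⟩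
  have hent : ∀ g i j, M g i j ∈ R := by
    intro g
    have hg : g ∈ Submonoid.closure S := hS ▸ Submonoid.mem_top g
    induction hg using Submonoid.closure_induction with
    | mem x hx =>
      exact fun i j => Algebra.subset_adjoin (Set.mem_biUnion hx ⟨(i, j), rfl⟩)
    | one =>
      intro i j
      rw [map_one, Matrix.one_apply]
      split_ifs
      exacts [R.one_mem, R.zero_mem]
    | mul x y _ _ hx hy =>
      intro i j
      rw [map_mul, Matrix.mul_apply]
      exact R.sum_mem fun l _ => R.mul_mem (hx i l) (hy l j)
  let N : G → Matrix m m R := fun g => Matrix.of fun i j => ⟨M g i j, hent g i j⟩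
  have hN : ∀ g, R.val.mapMatrix (N g) = M g := fun g => rfl
  have hinj : Function.Injective (R.val.mapMatrix (m := m)) :=
    Matrix.map_injective Subtype.val_injective
  have hnil : ∀ g, ∃ k : ℕ, 0 < k ∧ IsNilpotent (N g ^ k - 1) := by
    intro g
    obtain ⟨k, hk, h⟩ := hM g
    refine ⟨k, hk, (IsNilpotent.map_iff hinj).1 ?_⟩
    rw [map_sub, map_pow, map_one, hN]
    exact h
  have htr : ∀ g, ((N g).trace : ℂ) = (M g).trace := by
    intro g
    simp [N, Matrix.trace]
  -- By Zariski's lemma, the residue field at a maximal ideal of `R` is a number field.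
  obtain ⟨I, hI⟩ := Ideal.exists_maximal R
  let := Ideal.Quotient.field I
  have hfd : Module.Finite ℚ (R ⧸ I) := finite_of_finite_type_of_isJacobsonRing ℚ (R ⧸ I)
  have : CharZero (R ⧸ I) := algebraRat.charZero _
  -- Finiteness is transported from the quotient `ℚ`-algebra structure on `R ⧸ I` to the one of a
  -- field of characteristic zero.
  have : NumberField (R ⧸ I) := by
    have key : ∀ a a' : Algebra ℚ (R ⧸ I), @Module.Finite ℚ (R ⧸ I) _ _ a.toModule →
        @Module.Finite ℚ (R ⧸ I) _ _ a'.toModule := fun a a' h => Subsingleton.elim a a' ▸ h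
    exact @NumberField.mk _ _ _ (key (Ideal.Quotient.algebra ℚ) _ hfd)
  have hintegral : ∀ g, IsIntegral ℤ (N g).trace := by
    intro g
    obtain ⟨k, hk, h⟩ := hM g
    have h1 := (norm_matrix_trace_le _ hk h).2
    rw [← htr] at h1
    exact (isIntegral_algHom_iff (R.val.restrictScalars ℤ) Subtype.val_injective).1 h1
  let F : Set (R ⧸ I) := {x | IsIntegral ℤ x ∧ ∀ φ : (R ⧸ I) →+* ℂ, ‖φ x‖ ≤ Fintype.card m}
  have hF : F.Finite := NumberField.Embeddings.finite_of_norm_le _ _ _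
  have hmem : ∀ g, Ideal.Quotient.mk I (N g).trace ∈ F := by
    intro g
    refine ⟨(hintegral g).map (Ideal.Quotient.mk I).toIntAlgHom, fun φ => ?_⟩
    obtain ⟨k, hk, h⟩ := hnil g
    have h1 := h.map ((φ.comp (Ideal.Quotient.mk I)).mapMatrix (m := m))
    rw [map_sub, map_pow, map_one] at h1
    have h2 := (norm_matrix_trace_le _ hk h1).1
    rwa [show ((φ.comp (Ideal.Quotient.mk I)).mapMatrix (N g)).trace
      = φ (Ideal.Quotient.mk I (N g).trace) by simp [Matrix.trace]] at h2
  have hfinN : (Set.range fun g => (N g).trace).Finite := by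
    refine Set.Finite.of_finite_image (f := Ideal.Quotient.mk I) (hF.subset ?_) ?_
    · rintro _ ⟨_, ⟨g, rfl⟩, rfl⟩
      exact hmem g
    · -- A nonzero algebraic element of the domain `R` divides a nonzero rational integer, and
      -- such an integer is still nonzero in the characteristic-zero field `R ⧸ I`.
      rintro _ ⟨g, rfl⟩ _ ⟨h, rfl⟩ heq
      by_contra hne
      have hx : (N g).trace - (N h).trace ≠ 0 := sub_ne_zero.2 hne
      obtain ⟨r, hr, hdvd⟩ := ((hintegral g).sub (hintegral h)).isAlgebraic.exists_nonzero_dvd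
        (mem_nonZeroDivisors_of_ne_zero hx)
      have h0 := map_dvd (Ideal.Quotient.mk I) hdvd
      rw [map_sub, sub_eq_zero.2 heq, zero_dvd_iff] at h0
      exact hr (by simpa using h0)
  refine (hfinN.image ((↑) : R → ℂ)).subset ?_
  rintro _ ⟨g, rfl⟩
  exact ⟨_, ⟨g, rfl⟩, htr g⟩

/-- In the irreducible case `σ g` is determined by the numbers `tr (σ g * σ h)`, for `σ h` running
through a finite spanning subset of `End V`. -/
theorem finite_of_irr {G : Type*} [Group G] (hFG : Group.FG G) {V : Type*} [AddCommGroup V]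
    [Module ℂ V] [FiniteDimensional ℂ V] [Nontrivial V] (σ : G →* Module.End ℂ V)
    (hσ : ∀ g, ∃ k : ℕ, 0 < k ∧ IsNilpotent (σ g ^ k - 1))
    (hirr : ∀ W : Submodule ℂ V, (∀ g, ∀ v ∈ W, σ g v ∈ W) → W = ⊥ ∨ W = ⊤) :
    (Set.range σ).Finite := by
  let b := Module.finBasis ℂ V
  have htr : (Set.range fun g => LinearMap.trace ℂ V (σ g)).Finite := by
    convert finite_traces hFG
      ((LinearMap.toMatrixAlgEquiv b).toMulEquiv.toMonoidHom.comp σ) (fun g => ?_) using 3 with g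
    · exact LinearMap.trace_eq_matrix_trace ℂ b _
    · obtain ⟨k, hk, h⟩ := hσ g
      exact ⟨k, hk, by simpa using h.map (LinearMap.toMatrixAlgEquiv b)⟩
  have hspan : Submodule.span ℂ (Set.range σ) = ⊤ := by
    have h1 : Algebra.adjoin ℂ (Set.range σ) = ⊤ :=
      eq_top_of_irreducible _ fun W hW => hirr W fun g v hv =>
        hW _ (Algebra.subset_adjoin ⟨g, rfl⟩) v hv
    have h2 := Algebra.adjoin_eq_span ℂ (Set.range σ)
    rw [h1, ← MonoidHom.coe_mrange, Submonoid.closure_eq] at h2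
    simpa using h2.symm
  obtain ⟨T, hTσ, hT⟩ := (Submodule.fg_span_iff_fg_span_finset_subset (Set.range σ)).1
    (IsNoetherian.noetherian (R := ℂ) _)
  rw [hspan] at hT
  let Φ : Module.End ℂ V → (T → ℂ) := fun f t => LinearMap.trace ℂ V (f * t)
  refine Set.Finite.of_finite_image (f := Φ)
    ((Set.Finite.pi' fun _ : T => htr).subset ?_) ?_
  · rintro _ ⟨_, ⟨g, rfl⟩, rfl⟩ t
    obtain ⟨h, hh⟩ := hTσ t.2
    exact ⟨g * h, by simp [Φ, hh]⟩
  · intro x _ y _ hxy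
    refine sub_eq_zero.1 (eq_zero_of_trace_mul _ fun g => ?_)
    have hg : g ∈ Submodule.span ℂ (T : Set (Module.End ℂ V)) := hT ▸ Submodule.mem_top
    induction hg using Submodule.span_induction with
    | mem t ht => simpa [Φ, sub_mul, sub_eq_zero] using congrFun hxy ⟨t, ht⟩
    | zero => simp
    | add a c _ _ ha hc => rw [mul_add, map_add, ha, hc, add_zero]
    | smul z a _ ha => rw [mul_smul_comm, map_smul, ha, smul_zero]

/-- If `G` is finitely generated and `ρ : G → GL_n(ℂ)` has `ρ(g)`
quasi-unipotent for all `g`, then the semisimplification of `ρ` has finite image;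
equivalently, every irreducible subquotient of `ρ` has finite image. -/
theorem stmt1 {G : Type*} [Group G] (hFG : Group.FG G) {n : ℕ}
    (ρ : Representation ℂ G (Fin n → ℂ))
    (hqu : ∀ g : G, ∃ k : ℕ, 0 < k ∧ IsNilpotent ((ρ g) ^ k - 1))
    (p q : Submodule ℂ (Fin n → ℂ)) (hle : p ≤ q)
    (hp : ∀ g : G, ∀ v ∈ p, ρ g v ∈ p) (hq : ∀ g : G, ∀ v ∈ q, ρ g v ∈ q)
    (hnt : Nontrivial (q ⧸ p.comap q.subtype))
    (hirr : ∀ W : Submodule ℂ (q ⧸ p.comap q.subtype),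
      (∀ g : G, ∀ v ∈ W, subquotRep ρ p q hp hq g v ∈ W) → W = ⊥ ∨ W = ⊤) :
    Set.Finite (Set.range (subquotRep ρ p q hp hq)) := by
  let σ : G →* Module.End ℂ (q ⧸ p.comap q.subtype) :=
    { toFun := subquotRep ρ p q hp hq
      map_one' := by
        ext x
        simp [subquotRep]
        rfl
      map_mul' := fun g h => by
        ext x
        simp [subquotRep]
        rfl }
  refine finite_of_irr hFG σ (fun g => ?_) hirr
  obtain ⟨k, hk, m, hm⟩ := hqu g
  refine ⟨k, hk, m, ?_⟩
  -- Evaluation on representatives: `σ g` is induced by `ρ g`, hence so are the polynomials in it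
  -- below, and nilpotency passes to the subquotient.
  have h1 : ∀ (a : ℕ) (x : q), ∃ hx : (ρ g ^ a) x ∈ q,
      (σ g ^ a) (Submodule.Quotient.mk x) = Submodule.Quotient.mk ⟨(ρ g ^ a) x, hx⟩ := by
    intro a x
    rw [← map_pow, ← map_pow]
    exact ⟨hq _ _ x.2, rfl⟩
  have h2 : ∀ (a : ℕ) (x : q), ∃ hx : ((ρ g ^ k - 1) ^ a) x ∈ q,
      ((σ g ^ k - 1) ^ a) (Submodule.Quotient.mk x)
        = Submodule.Quotient.mk ⟨((ρ g ^ k - 1) ^ a) x, hx⟩ := by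
    intro a
    induction a with
    | zero => exact fun x => ⟨x.2, rfl⟩
    | succ a ih =>
      intro x
      obtain ⟨hx, e⟩ := ih x
      obtain ⟨hy, e'⟩ := h1 k ⟨_, hx⟩
      simp only [pow_succ', Module.End.mul_apply, e]
      refine ⟨q.sub_mem hy hx, ?_⟩
      rw [LinearMap.sub_apply, e']
      rfl
  refine LinearMap.ext fun y => ?_
  obtain ⟨x, rfl⟩ := Submodule.Quotient.mk_surjective _ y
  obtain ⟨hx, e⟩ := h2 m x
  rw [e, LinearMap.zero_apply, Submodule.Quotient.mk_eq_zero]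
  simp [hm]
end

section
/- Let G be a finitely generated group, H ⊆ G a finite-index subgroup, and ρ: G → GL_n(ℂ) a representation such that the semisimplification of the restriction ρ|_H has finite image. Then the semisimplification of ρ has finite image. -/
/-- `subquotRep` bundled as a monoid homomorphism. -/
def subquotHom {G V : Type*} [Group G] [AddCommGroup V] [Module ℂ V]
    (ρ : Representation ℂ G V) (p q : Submodule ℂ V)
    (hp : ∀ g : G, ∀ v ∈ p, ρ g v ∈ p) (hq : ∀ g : G, ∀ v ∈ q, ρ g v ∈ q) :
    G →* Module.End ℂ (q ⧸ p.comap q.subtype) where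
  toFun := subquotRep ρ p q hp hq
  map_one' := by
    ext x
    simp only [subquotRep, LinearMap.comp_apply, Submodule.mkQ_apply, Submodule.mapQ_apply]
    congr 1
    ext1
    simp
  map_mul' g h := by
    ext x
    simp only [subquotRep, LinearMap.comp_apply, Submodule.mkQ_apply, Submodule.mapQ_apply,
      Module.End.mul_apply]
    congr 1
    ext1
    simp

/-- A monoid homomorphism from a group with finite range has a kernel of finite index, also when
the target is only a monoid. -/
lemma finiteIndex_ker_of_finite_range {G M : Type*} [Group G] [Monoid M] (f : G →* M)
    (hf : (Set.range f).Finite) : f.ker.FiniteIndex := by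
  have hker : f.toHomUnits.ker = f.ker := by
    ext g
    simp [MonoidHom.mem_ker]
  have : Finite f.toHomUnits.range := by
    have : (Units.val '' (f.toHomUnits.range : Set Mˣ)).Finite := by
      refine hf.subset ?_
      rintro _ ⟨_, ⟨g, rfl⟩, rfl⟩
      exact ⟨g, rfl⟩
    exact (Set.Finite.of_finite_image this Units.val_injective.injOn).to_subtype
  rw [← hker]
  infer_instance

lemma finite_range_of_finiteIndex_le_ker {G M : Type*} [Group G] [Monoid M] (f : G →* M)
    (N : Subgroup G) [N.FiniteIndex] (h : N ≤ f.ker) : (Set.range f).Finite := by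
  have hc : ∀ a b : G, QuotientGroup.leftRel N a b → f a = f b := by
    intro a b hab
    have h1 : f (a⁻¹ * b) = 1 := h (QuotientGroup.leftRel_apply.mp hab)
    calc f a = f a * f (a⁻¹ * b) := by rw [h1, mul_one]
      _ = f b := by rw [← map_mul, mul_inv_cancel_left]
  refine (Set.finite_range (fun x : G ⧸ N => Quotient.lift f hc x)).subset ?_
  rintro _ ⟨g, rfl⟩
  exact ⟨(g : G ⧸ N), rfl⟩

/-- If a finite-index subgroup acts trivially on a nonzero vector of an irreducible
representation, then the representation has finite image. -/
lemma finite_range_of_fixed {G S : Type*} [Group G] [AddCommGroup S] [Module ℂ S]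
    (R : G →* Module.End ℂ S)
    (hirr : ∀ W : Submodule ℂ S, (∀ g : G, ∀ v ∈ W, R g v ∈ W) → W = ⊥ ∨ W = ⊤)
    (K : Subgroup G) [K.FiniteIndex] (x : S) (hx : x ≠ 0) (hK : ∀ k ∈ K, R k x = x) :
    (Set.range R).Finite := by
  let W : Submodule ℂ S :=
    { carrier := {v | ∀ k ∈ K.normalCore, R k v = v}
      add_mem' := fun {a b} ha hb k hk => by rw [map_add, ha k hk, hb k hk]
      zero_mem' := fun k _ => map_zero _
      smul_mem' := fun c a ha k hk => by rw [map_smul, ha k hk] }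
  have hW : ∀ g : G, ∀ v ∈ W, R g v ∈ W := by
    intro g v hv k hk
    have hk' : g⁻¹ * k * g ∈ K.normalCore := by
      simpa using (inferInstance : K.normalCore.Normal).conj_mem k hk g⁻¹
    calc R k (R g v) = R g (R (g⁻¹ * k * g) v) := by
          rw [← Module.End.mul_apply, ← Module.End.mul_apply, ← map_mul, ← map_mul]
          congr 2
          group
      _ = R g v := by rw [hv _ hk']
  have hxW : x ∈ W := fun k hk => hK k (K.normalCore_le hk)
  rcases hirr W hW with h | h
  · rw [h] at hxW
    exact absurd ((Submodule.mem_bot ℂ).mp hxW) hx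
  · refine finite_range_of_finiteIndex_le_ker R K.normalCore fun k hk => ?_
    refine LinearMap.ext fun v => ?_
    have hv : v ∈ W := h ▸ Submodule.mem_top
    exact hv k hk

/-- A minimal invariant `r` strictly containing `p` gives an irreducible subquotient `r/p`. -/
lemma subquot_irreducible_of_minimal {G V : Type*} [Group G] [AddCommGroup V] [Module ℂ V]
    (ρ : Representation ℂ G V) (p r : Submodule ℂ V) (hpr : p ≤ r)
    (hp : ∀ g : G, ∀ v ∈ p, ρ g v ∈ p) (hr : ∀ g : G, ∀ v ∈ r, ρ g v ∈ r)
    (hmin : ∀ s : Submodule ℂ V, p < s → s ≤ r → (∀ g : G, ∀ v ∈ s, ρ g v ∈ s) → s = r)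
    (W : Submodule ℂ (r ⧸ p.comap r.subtype))
    (hW : ∀ g : G, ∀ v ∈ W, subquotRep ρ p r hp hr g v ∈ W) : W = ⊥ ∨ W = ⊤ := by
  let s : Submodule ℂ V := (W.comap (p.comap r.subtype).mkQ).map r.subtype
  have mem_s : ∀ y : r, (y : V) ∈ s ↔ (p.comap r.subtype).mkQ y ∈ W := by
    intro y
    constructor
    · rintro ⟨z, hz, hzy⟩
      have : z = y := Subtype.ext hzy
      exact this ▸ hz
    · exact fun h => ⟨y, h, rfl⟩
  have hsr : s ≤ r := Submodule.map_subtype_le _ _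
  have hps : p ≤ s := by
    intro v hv
    refine (mem_s ⟨v, hpr hv⟩).mpr ?_
    have : (p.comap r.subtype).mkQ ⟨v, hpr hv⟩ = 0 := by
      simpa using hv
    rw [this]
    exact W.zero_mem
  have hsinv : ∀ g : G, ∀ v ∈ s, ρ g v ∈ s := by
    intro g v hv
    have h1 := hW g _ ((mem_s ⟨v, hsr hv⟩).mp hv)
    exact (mem_s ⟨ρ g v, hr g v (hsr hv)⟩).mpr h1
  rcases hps.eq_or_lt with h | h
  · left
    rw [eq_bot_iff]
    intro x hx
    obtain ⟨y, rfl⟩ := Submodule.mkQ_surjective _ x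
    have hy : (y : V) ∈ p := h ▸ (mem_s y).mpr hx
    simpa using hy
  · right
    have hsr' := hmin s h hsr hsinv
    rw [eq_top_iff]
    intro x _
    obtain ⟨y, rfl⟩ := Submodule.mkQ_surjective _ x
    exact (mem_s y).mp (hsr'.ge y.2)

/-- Let `G` be finitely generated, `H ≤ G` of finite index, and
`ρ : G → GL_n(ℂ)` such that the semisimplification of `ρ|_H` has finite image (i.e. every
irreducible `H`-subquotient of `ρ|_H` has finite image). Then the semisimplification of
`ρ` has finite image (every irreducible `G`-subquotient has finite image). -/
theorem stmt9 {G : Type*} [Group G] (hFG : Group.FG G) (H : Subgroup G) [H.FiniteIndex]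
    {n : ℕ} (ρ : Representation ℂ G (Fin n → ℂ))
    (hssH : ∀ (p q : Submodule ℂ (Fin n → ℂ)), p ≤ q →
      ∀ (hp : ∀ h : H, ∀ v ∈ p, ρ.comp H.subtype h v ∈ p)
        (hq : ∀ h : H, ∀ v ∈ q, ρ.comp H.subtype h v ∈ q),
      Nontrivial (q ⧸ p.comap q.subtype) →
      (∀ W : Submodule ℂ (q ⧸ p.comap q.subtype),
        (∀ h : H, ∀ v ∈ W, subquotRep (ρ.comp H.subtype) p q hp hq h v ∈ W) →
        W = ⊥ ∨ W = ⊤) →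
      Set.Finite (Set.range (subquotRep (ρ.comp H.subtype) p q hp hq))) :
    ∀ (p q : Submodule ℂ (Fin n → ℂ)), p ≤ q →
      ∀ (hp : ∀ g : G, ∀ v ∈ p, ρ g v ∈ p) (hq : ∀ g : G, ∀ v ∈ q, ρ g v ∈ q),
      Nontrivial (q ⧸ p.comap q.subtype) →
      (∀ W : Submodule ℂ (q ⧸ p.comap q.subtype),
        (∀ g : G, ∀ v ∈ W, subquotRep ρ p q hp hq g v ∈ W) → W = ⊥ ∨ W = ⊤) →
      Set.Finite (Set.range (subquotRep ρ p q hp hq)) := by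
  intro p q hpq hp hq hnt hirr
  have hlt : p < q := by
    refine lt_of_le_of_ne hpq ?_
    rintro rfl
    obtain ⟨x, hx⟩ := exists_ne (0 : p ⧸ p.comap p.subtype)
    obtain ⟨y, rfl⟩ := Submodule.mkQ_surjective _ x
    exact hx (by simp)
  obtain ⟨r, ⟨hpr, hrq, hr⟩, hrmin⟩ := WellFounded.has_min
    (wellFounded_lt (α := Submodule ℂ (Fin n → ℂ)))
    {r | p < r ∧ r ≤ q ∧ ∀ h : H, ∀ v ∈ r, ρ.comp H.subtype h v ∈ r}
    ⟨q, hlt, le_rfl, fun h => hq h⟩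
  have hpH : ∀ h : H, ∀ v ∈ p, ρ.comp H.subtype h v ∈ p := fun h => hp h
  obtain ⟨w, hwr, hwp⟩ := SetLike.exists_of_lt hpr
  have hntr : Nontrivial (r ⧸ p.comap r.subtype) := by
    refine ⟨⟨(p.comap r.subtype).mkQ ⟨w, hwr⟩, 0, ?_⟩⟩
    simpa using hwp
  have hfin := hssH p r hpr.le hpH hr hntr
    (subquot_irreducible_of_minimal (ρ.comp H.subtype) p r hpr.le hpH hr fun s h1 h2 h3 =>
      h2.eq_of_not_lt (hrmin s ⟨h1, h2.trans hrq, h3⟩))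
  have hker : (subquotHom (ρ.comp H.subtype) p r hpH hr).ker.FiniteIndex :=
    finiteIndex_ker_of_finite_range _ hfin
  set K := (subquotHom (ρ.comp H.subtype) p r hpH hr).ker with hKdef
  have hK : (K.map H.subtype).FiniteIndex := by
    refine ⟨?_⟩
    rw [Subgroup.index_map_subtype]
    exact mul_ne_zero hker.index_ne_zero Subgroup.FiniteIndex.index_ne_zero
  refine finite_range_of_fixed (subquotHom ρ p q hp hq) hirr (K.map H.subtype)
    ((p.comap q.subtype).mkQ ⟨w, hrq hwr⟩) (by simpa using hwp) ?_
  rintro _ ⟨k, hk, rfl⟩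
  have h1 : subquotRep (ρ.comp H.subtype) p r hpH hr k ((p.comap r.subtype).mkQ ⟨w, hwr⟩) =
      (p.comap r.subtype).mkQ ⟨w, hwr⟩ :=
    LinearMap.congr_fun (show subquotHom (ρ.comp H.subtype) p r hpH hr k = 1 from hk) _
  -- Both fixed-vector equations, in `r/p` and in `q/p`, say that `ρ k w - w ∈ p`.
  have h2 : ρ k w - w ∈ p := (Submodule.Quotient.eq (p.comap r.subtype)).mp h1
  exact (Submodule.Quotient.eq (p.comap q.subtype)).mpr h2
end
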